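/- (Leibniz type rule for the Katugampola derivative.) Let 0 < α < 1, ρ > 0, 0 < a < b, and take Ψ(x) := x^ρ. Suppose f = h ∘ Ψ and g = w ∘ Ψ with h, w : ℝ → ℝ real-analytic with everywhere-convergent power series, and write f⁽ᵐ⁾(x) := h⁽ᵐ⁾(x^ρ). Then for every x ∈ (a,b): (^{RL}D^{α;Ψ}(f·g))(x) = Σ_{m=0}^∞ binom(α, m) f⁽ᵐ⁾(x) (^{RL}D^{α−m;Ψ} g)(x), the series converging. (Here ^{RL}D^{α;Ψ} with Ψ(x) = x^ρ equals ρ^{−α} times the Katugampola fractional derivative of order α.) -/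

import Mathlib

open Real

/-- Generalized binomial coefficient `binom(γ, n) = γ(γ-1)⋯(γ-n+1)/n!`. -/
noncomputable def genBinom (γ : ℝ) (n : ℕ) : ℝ :=
  (∏ i ∈ Finset.range n, (γ - (i : ℝ))) / (n.factorial : ℝ)

/-- Ψ-Riemann–Liouville fractional integral of order `α` with base point `a`;
by convention the order-0 integral is the identity. -/
noncomputable def psiI (a : ℝ) (Ψ f : ℝ → ℝ) (α : ℝ) (x : ℝ) : ℝ :=
  if α = 0 then f x
  else (Real.Gamma α)⁻¹ * ∫ t in a..x, deriv Ψ t * (Ψ x - Ψ t) ^ (α - 1) * f t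

/-- Ψ-Riemann–Liouville fractional derivative of order `γ` (for `γ ≤ 0` it is the
fractional integral of order `-γ`, the order-0 case being the identity). -/
noncomputable def psiRLD (a : ℝ) (Ψ f : ℝ → ℝ) (γ : ℝ) (x : ℝ) : ℝ :=
  if γ ≤ 0 then psiI a Ψ f (-γ) x
  else (deriv Ψ x)⁻¹ * deriv (fun y => psiI a Ψ f (1 - γ) y) x

/-- Ψ-Caputo fractional derivative of order `γ` (for `γ ≤ 0` it is the
fractional integral of order `-γ`). -/
noncomputable def psiCD (a : ℝ) (Ψ f : ℝ → ℝ) (γ : ℝ) (x : ℝ) : ℝ :=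
  if γ ≤ 0 then psiI a Ψ f (-γ) x
  else psiI a Ψ (fun t => (deriv Ψ t)⁻¹ * deriv f t) (1 - γ) x

/-- Ψ-Hilfer fractional derivative of order `α` and type `β`. -/
noncomputable def psiHD (a : ℝ) (Ψ f : ℝ → ℝ) (α β : ℝ) (x : ℝ) : ℝ :=
  psiI a Ψ
    (fun y => (deriv Ψ y)⁻¹ * deriv (fun z => psiI a Ψ f ((1 - β) * (1 - α)) z) y)
    (β * (1 - α)) x

/-- Classical Riemann–Liouville fractional integral with base point `a`. -/
noncomputable def rlI (a : ℝ) (α : ℝ) (f : ℝ → ℝ) (x : ℝ) : ℝ :=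
  if α = 0 then f x
  else (Real.Gamma α)⁻¹ * ∫ t in a..x, (x - t) ^ (α - 1) * f t

/-- Classical Riemann–Liouville fractional derivative (fractional integral for `γ ≤ 0`). -/
noncomputable def rlD (a : ℝ) (γ : ℝ) (f : ℝ → ℝ) (x : ℝ) : ℝ :=
  if γ ≤ 0 then rlI a (-γ) f x
  else deriv (fun y => rlI a (1 - γ) f y) x

/-- Classical Caputo fractional derivative (fractional integral for `γ ≤ 0`). -/
noncomputable def capD (a : ℝ) (γ : ℝ) (f : ℝ → ℝ) (x : ℝ) : ℝ :=
  if γ ≤ 0 then rlI a (-γ) f x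
  else rlI a (1 - γ) (deriv f) x

/-- Classical Hilfer fractional derivative of order `α` and type `β`. -/
noncomputable def hilD (a : ℝ) (α β : ℝ) (f : ℝ → ℝ) (x : ℝ) : ℝ :=
  rlI a (β * (1 - α))
    (fun y => deriv (fun z => rlI a ((1 - β) * (1 - α)) f z) y) x

/-- Hadamard fractional integral with base point `a`. -/
noncomputable def hadI (a : ℝ) (α : ℝ) (f : ℝ → ℝ) (x : ℝ) : ℝ :=
  if α = 0 then f x
  else (Real.Gamma α)⁻¹ * ∫ t in a..x, (Real.log x - Real.log t) ^ (α - 1) * f t / t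

/-- Caputo–Hadamard fractional derivative (Hadamard fractional integral for `γ ≤ 0`). -/
noncomputable def chD (a : ℝ) (γ : ℝ) (f : ℝ → ℝ) (x : ℝ) : ℝ :=
  if γ ≤ 0 then hadI a (-γ) f x
  else hadI a (1 - γ) (fun t => t * deriv f t) x

/-- `h` is real-analytic with a power series converging on all of `ℝ`. -/
def EntireReal (h : ℝ → ℝ) : Prop :=
  ∃ p : FormalMultilinearSeries ℝ ℝ ℝ, HasFPowerSeriesOnBall h p 0 ⊤

/-!
The substitution `s = Ψ t` turns the `Ψ`-operators into classical Riemann–Liouville ones, so put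
`X = Ψ x` and write `h * w = h X * w + (s - X) * u` with `u = dslope h X * w`. Since
`s - X = (s - Y) + (Y - X)`, the derivative of order `α` of `(s - X) * u` at `X` is `α` times the
fractional integral of order `1 - α` of `u`. The difference quotient `dslope h X` is given by the
Taylor series of `h` at `X` with one power of `s - X` removed. Integrating termwise, `(s - X) ^ m`
is absorbed by the kernel, which raises the order of the integral by `m` at the cost of the factor
`(-1) ^ m * Γ(1 - α + m) / Γ(1 - α)`; times `α / (m + 1)!`, this is `binom(α, m + 1)`.
-/

lemma hasDerivAt_sub_smul_of_continuousAt {𝕜 E : Type*} [NontriviallyNormedField 𝕜]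
    [NormedAddCommGroup E] [NormedSpace 𝕜 E] {f : 𝕜 → E} {x : 𝕜} (hf : ContinuousAt f x) :
    HasDerivAt (fun y => (y - x) • f y) (f x) x := by
  refine hasDerivAt_iff_tendsto_slope.2 (hf.continuousWithinAt.tendsto.congr' ?_)
  filter_upwards [self_mem_nhdsWithin] with y hy
  rw [slope_def_module, sub_self, zero_smul, sub_zero, inv_smul_smul₀ (sub_ne_zero.2 hy)]

lemma continuous_dslope {𝕜 E : Type*} [NontriviallyNormedField 𝕜] [NormedAddCommGroup E]
    [NormedSpace 𝕜 E] {f : 𝕜 → E} {x : 𝕜} (hf : Continuous f) (hfx : DifferentiableAt 𝕜 f x) :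
    Continuous (dslope f x) :=
  continuousOn_univ.1 ((continuousOn_dslope Filter.univ_mem).2 ⟨hf.continuousOn, hfx⟩)

section RiemannLiouville

open MeasureTheory Set Filter Topology

variable {A X Y β : ℝ} {u : ℝ → ℝ}

lemma intervalIntegrable_rpow_sub_mul (hβ : 0 < β) (hu : Continuous u) (A B Y : ℝ) :
    IntervalIntegrable (fun s => (Y - s) ^ (β - 1) * u s) volume A B := by
  have hker := (intervalIntegral.intervalIntegrable_rpow' (a := Y - A) (b := Y - B)
    (r := β - 1) (by linarith)).comp_sub_left Y
  simp only [sub_sub_cancel] at hker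
  exact hker.mul_continuousOn hu.continuousOn

lemma rlI_eq_integral (hβ : β ≠ 0) (A : ℝ) (u : ℝ → ℝ) (Y : ℝ) :
    rlI A β u Y = (Gamma β)⁻¹ * ∫ s in A..Y, (Y - s) ^ (β - 1) * u s :=
  if_neg hβ

lemma rlI_add {v : ℝ → ℝ} (hβ : 0 < β) (hu : Continuous u) (hv : Continuous v) (A Y : ℝ) :
    rlI A β (fun s => u s + v s) Y = rlI A β u Y + rlI A β v Y := by
  simp only [rlI_eq_integral hβ.ne', mul_add]
  rw [intervalIntegral.integral_add (intervalIntegrable_rpow_sub_mul hβ hu A Y Y)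
    (intervalIntegrable_rpow_sub_mul hβ hv A Y Y), mul_add]

lemma rlI_const_mul (A β c : ℝ) (u : ℝ → ℝ) (Y : ℝ) :
    rlI A β (fun s => c * u s) Y = c * rlI A β u Y := by
  simp only [rlI, mul_left_comm _ c, intervalIntegral.integral_const_mul, mul_ite]

lemma rlI_const (hβ : 0 < β) (A c Y : ℝ) :
    rlI A β (fun _ => c) Y = c * ((Gamma β)⁻¹ * ((Y - A) ^ β / β)) := by
  have hint : ∫ s in A..Y, (Y - s) ^ (β - 1) = (Y - A) ^ β / β := by
    rw [intervalIntegral.integral_comp_sub_left (fun r => r ^ (β - 1)), sub_self,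
      integral_rpow (Or.inl (by linarith)), sub_add_cancel, zero_rpow hβ.ne', sub_zero]
  rw [rlI_eq_integral hβ.ne', intervalIntegral.integral_mul_const, hint]
  ring

lemma rlI_sub_pow_mul (hβ : 0 < β) (hAX : A ≤ X) (u : ℝ → ℝ) (m : ℕ) :
    rlI A β (fun s => (s - X) ^ m * u s) X =
      (-1) ^ m * (Gamma (β + m) / Gamma β) * rlI A (β + m) u X := by
  have hβm : 0 < β + m := by positivity
  have hker : ∫ s in A..X, (X - s) ^ (β - 1) * ((s - X) ^ m * u s) =
      ∫ s in A..X, (-1) ^ m * ((X - s) ^ (β + m - 1) * u s) := by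
    refine intervalIntegral.integral_congr_Ioo_of_le hAX fun s hs => ?_
    have hpow : (X - s) ^ (β + m - 1) = (X - s) ^ (β - 1) * (X - s) ^ m := by
      rw [← rpow_add_natCast (sub_pos.2 hs.2).ne']
      ring_nf
    simp only [hpow, ← neg_sub X s, neg_pow (X - s)]
    ring
  rw [rlI_eq_integral hβ.ne', rlI_eq_integral hβm.ne', hker, intervalIntegral.integral_const_mul]
  have := (Gamma_pos_of_pos hβm).ne'
  field_simp

-- The substitution `s = Y - r` makes the singularity of the kernel independent of `Y`.
lemma continuous_rlI (hβ : 0 < β) (hu : Continuous u) (A : ℝ) : Continuous (rlI A β u) := by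
  have hreflect : rlI A β u = fun Y =>
      (Gamma β)⁻¹ * ∫ r in (0 : ℝ)..(Y - A), r ^ (β - 1) * u (Y - r) := by
    funext Y
    rw [rlI_eq_integral hβ.ne',
      ← sub_self Y, ← intervalIntegral.integral_comp_sub_left (fun r => r ^ (β - 1) * u (Y - r))]
    simp only [sub_sub_cancel]
  rw [hreflect]
  refine continuous_const.mul (continuous_iff_continuousAt.2 fun X => ?_)
  set R := |X - A| + 1
  obtain ⟨hX₁, hX₂⟩ := abs_lt.1 (lt_add_one |X - A|)
  obtain ⟨C, hC⟩ := (isCompact_Icc (a := X - 1 - R) (b := X + 1 + R)).exists_bound_of_continuousOn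
    hu.continuousOn
  have hker : IntervalIntegrable (fun r : ℝ => ‖r ^ (β - 1)‖ * C) volume (-R) R :=
    (intervalIntegral.intervalIntegrable_rpow' (by linarith)).norm.mul_const C
  have hprim := intervalIntegral.continuousAt_parametric_primitive_of_dominated
    (F := fun Y r => r ^ (β - 1) * u (Y - r)) (μ := volume) (a₀ := 0) (b₀ := X - A) (x₀ := X)
    _ (-R) R
    (fun Y => ((measurable_id.pow_const _).mul
      (hu.comp (continuous_const.sub continuous_id)).measurable).aestronglyMeasurable)
    (by
      filter_upwards [Ioo_mem_nhds (sub_one_lt X) (lt_add_one X)] with Y hY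
      refine (ae_restrict_iff' measurableSet_uIoc).2 (Eventually.of_forall fun r hr => ?_)
      rw [uIoc_of_le (by linarith)] at hr
      rw [norm_mul]
      gcongr
      exact hC _ ⟨by linarith [hr.2, hY.1], by linarith [hr.1, hY.2]⟩)
    hker
    (Eventually.of_forall fun r => (continuous_const.mul
      (hu.comp (continuous_id.sub continuous_const))).continuousAt)
    ⟨by linarith [abs_nonneg (X - A)], by linarith [abs_nonneg (X - A)]⟩ ⟨hX₁, hX₂⟩
    (by simp)
  exact hprim.comp (f := fun Y => (Y, Y - A)) (by fun_prop)

lemma integral_integral_swap_triangle {F : ℝ → ℝ → ℝ} (hAY : A ≤ Y)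
    (hF : Integrable (({p | p.2 < p.1} : Set (ℝ × ℝ)).indicator F.uncurry)
      ((volume.restrict (Ioc A Y)).prod (volume.restrict (Ioc A Y)))) :
    ∫ r in A..Y, ∫ s in A..r, F r s = ∫ s in A..Y, ∫ r in s..Y, F r s := by
  rw [intervalIntegral.integral_of_le hAY, intervalIntegral.integral_of_le hAY]
  have hswap := integral_integral_swap
    (f := fun r s => ({p | p.2 < p.1} : Set (ℝ × ℝ)).indicator F.uncurry (r, s)) hF
  convert! hswap using 1
  · refine setIntegral_congr_fun measurableSet_Ioc fun r hr => ?_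
    have hslice : ∀ s, ({p | p.2 < p.1} : Set (ℝ × ℝ)).indicator F.uncurry (r, s) =
        (Iio r).indicator (F r) s := fun s => rfl
    have hset : Ioc A Y ∩ Iio r = Ioo A r := by
      ext s
      simp only [mem_inter_iff, mem_Ioc, mem_Iio, mem_Ioo]
      grind
    simp only [hslice]
    rw [setIntegral_indicator measurableSet_Iio, hset, intervalIntegral.integral_of_le hr.1.le,
      integral_Ioc_eq_integral_Ioo]
  · refine setIntegral_congr_fun measurableSet_Ioc fun s hs => ?_
    have hslice : ∀ r, ({p | p.2 < p.1} : Set (ℝ × ℝ)).indicator F.uncurry (r, s) =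
        (Ioi s).indicator (fun r => F r s) r := fun r => rfl
    have hset : Ioc A Y ∩ Ioi s = Ioc s Y := by
      ext r
      simp only [mem_inter_iff, mem_Ioc, mem_Ioi]
      grind
    simp only [hslice]
    rw [setIntegral_indicator measurableSet_Ioi, hset, intervalIntegral.integral_of_le hs.2]

lemma integrable_indicator_rpow_sub_mul (hβ : 0 < β) (hu : Continuous u) (A Y : ℝ) :
    Integrable (({p | p.2 < p.1} : Set (ℝ × ℝ)).indicator
        (Function.uncurry fun r s => (r - s) ^ (β - 1) * u s))
      ((volume.restrict (Ioc A Y)).prod (volume.restrict (Ioc A Y))) := by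
  have hu_int : Integrable ((Ioc A Y).indicator u) :=
    (hu.integrableOn_Ioc).integrable_indicator measurableSet_Ioc
  have hker_int : Integrable ((Ioc 0 (Y - A)).indicator fun r : ℝ => r ^ (β - 1)) :=
    ((intervalIntegral.intervalIntegrable_rpow' (by linarith)).1).integrable_indicator
      measurableSet_Ioc
  have hconv := (hu_int.convolution_integrand (ContinuousLinearMap.mul ℝ ℝ) hker_int).integrableOn
    (s := Ioc A Y ×ˢ Ioc A Y)
  rw [Measure.prod_restrict]
  refine hconv.congr_fun (fun p ⟨hr, hs⟩ => ?_) (measurableSet_Ioc.prod measurableSet_Ioc)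
  by_cases hlt : p.2 < p.1
  · have hmem : p.1 - p.2 ∈ Ioc 0 (Y - A) := ⟨by linarith, by linarith [hr.2, hs.1]⟩
    simp [hlt, hs, hmem, mul_comm, Function.uncurry]
  · have hmem : p.1 - p.2 ∉ Ioc 0 (Y - A) := fun h => hlt (by linarith [h.1])
    simp [hlt, hmem]

lemma rlI_add_one (hβ : 0 < β) (hu : Continuous u) (hAY : A ≤ Y) :
    rlI A (β + 1) u Y = ∫ r in A..Y, rlI A β u r := by
  have hinner : ∀ s, ∫ r in s..Y, (r - s) ^ (β - 1) * u s = β⁻¹ * ((Y - s) ^ β * u s) := by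
    intro s
    rw [intervalIntegral.integral_mul_const,
      intervalIntegral.integral_comp_sub_right (fun r => r ^ (β - 1)), sub_self,
      integral_rpow (Or.inl (by linarith)), sub_add_cancel, zero_rpow hβ.ne']
    ring
  simp only [rlI_eq_integral hβ.ne', rlI_eq_integral (by linarith : β + 1 ≠ 0),
    intervalIntegral.integral_const_mul, add_sub_cancel_right]
  rw [integral_integral_swap_triangle hAY (integrable_indicator_rpow_sub_mul hβ hu A Y)]
  simp only [hinner, intervalIntegral.integral_const_mul]
  rw [Gamma_add_one hβ.ne', mul_inv]
  ring

lemma hasDerivAt_rlI_add_one (hβ : 0 < β) (hu : Continuous u) (hAX : A < X) :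
    HasDerivAt (rlI A (β + 1) u) (rlI A β u X) X := by
  have hcont := continuous_rlI hβ hu A
  refine (hcont.integral_hasStrictDerivAt A X).hasDerivAt.congr_of_eventuallyEq ?_
  filter_upwards [Ioi_mem_nhds hAX] with Y hY
  exact rlI_add_one hβ hu (le_of_lt hY)

-- Writing `s - X = (s - Y) + (Y - X)` trades one factor of the kernel for the zero at `X`, so that
-- no derivative falls on `u`.
lemma hasDerivAt_rlI_sub_mul (hβ : 0 < β) (hu : Continuous u) (hAX : A < X) :
    HasDerivAt (rlI A β fun s => (s - X) * u s) ((1 - β) * rlI A β u X) X := by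
  have hsplit : ∀ Y, A ≤ Y → rlI A β (fun s => (s - X) * u s) Y =
      (Y - X) * rlI A β u Y - β * rlI A (β + 1) u Y := by
    intro Y hAY
    have hshift : (fun s => (s - X) * u s) = fun s => (s - Y) ^ 1 * u s + (Y - X) * u s := by
      funext s; ring
    rw [hshift, rlI_add hβ (by fun_prop) (by fun_prop), rlI_const_mul,
      rlI_sub_pow_mul hβ hAY, Nat.cast_one, Gamma_add_one hβ.ne',
      mul_div_cancel_right₀ _ (Gamma_pos_of_pos hβ).ne']
    ring
  have hderiv := (hasDerivAt_sub_smul_of_continuousAt (continuous_rlI hβ hu A).continuousAt).sub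
    ((hasDerivAt_rlI_add_one hβ hu hAX).const_mul β)
  rw [sub_mul, one_mul]
  refine hderiv.congr_of_eventuallyEq ?_
  filter_upwards [Ioi_mem_nhds hAX] with Y hY using hsplit Y (le_of_lt hY)

lemma rlI_mul_eq_add_dslope {h w : ℝ → ℝ} (hβ : 0 < β) (hh : Continuous h)
    (hhX : DifferentiableAt ℝ h X) (hw : Continuous w) :
    rlI A β (fun s => h s * w s) = fun Y =>
      h X * rlI A β w Y + rlI A β (fun s => (s - X) * (dslope h X s * w s)) Y := by
  have hq := continuous_dslope hh hhX
  have hsplit : (fun s => h s * w s) =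
      fun s => h X * w s + (s - X) * (dslope h X s * w s) := by
    funext s
    linear_combination -w s * sub_smul_dslope h X s
  funext Y
  rw [hsplit, rlI_add hβ (by fun_prop) (by fun_prop), rlI_const_mul]

lemma differentiableAt_rlI {φ : ℝ → ℝ} (hβ : 0 < β) (hφ : Continuous φ)
    (hφX : DifferentiableAt ℝ φ X) (hAX : A < X) : DifferentiableAt ℝ (rlI A β φ) X := by
  have hconst : DifferentiableAt ℝ (rlI A β fun _ => 1) X := by
    simp only [funext (rlI_const hβ A 1)]
    exact (((differentiableAt_id.sub_const A).rpow_const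
      (Or.inl (sub_pos.2 hAX).ne')).div_const β).const_mul _ |>.const_mul _
  have hsub := (hasDerivAt_rlI_sub_mul hβ (continuous_dslope hφ hφX) hAX).differentiableAt
  have hsplit := rlI_mul_eq_add_dslope (A := A) hβ hφ hφX (continuous_const (y := (1 : ℝ)))
  simp only [mul_one] at hsplit
  rw [hsplit]
  exact (hconst.const_mul _).add hsub

lemma rlD_eq_deriv {γ : ℝ} (hγ : 0 < γ) (A : ℝ) (f : ℝ → ℝ) (X : ℝ) :
    rlD A γ f X = deriv (rlI A (1 - γ) f) X :=
  if_neg hγ.not_ge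

lemma rlD_eq_rlI {γ : ℝ} (hγ : γ ≤ 0) (A : ℝ) (f : ℝ → ℝ) (X : ℝ) :
    rlD A γ f X = rlI A (-γ) f X :=
  if_pos hγ

lemma rlD_mul {α : ℝ} {h w : ℝ → ℝ} (hα0 : 0 < α) (hα1 : α < 1) (hAX : A < X)
    (hh : Continuous h) (hhX : DifferentiableAt ℝ h X)
    (hw : Continuous w) (hwX : DifferentiableAt ℝ w X) :
    rlD A α (fun s => h s * w s) X =
      h X * rlD A α w X + α * rlI A (1 - α) (fun s => dslope h X s * w s) X := by
  have hβ : 0 < 1 - α := sub_pos.2 hα1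
  have hw_deriv := (differentiableAt_rlI hβ hw hwX hAX).hasDerivAt.const_mul (h X)
  have hsub_deriv : HasDerivAt (rlI A (1 - α) fun s => (s - X) * (dslope h X s * w s))
      (α * rlI A (1 - α) (fun s => dslope h X s * w s) X) X := by
    simpa only [sub_sub_cancel] using hasDerivAt_rlI_sub_mul hβ
      (u := fun s => dslope h X s * w s) ((continuous_dslope hh hhX).mul hw) hAX
  rw [rlD_eq_deriv hα0, rlD_eq_deriv hα0, rlI_mul_eq_add_dslope hβ hh hhX hw]
  exact (hw_deriv.add hsub_deriv).deriv

lemma hasSum_rlI {F : ℕ → ℝ → ℝ} {φ : ℝ → ℝ} {b : ℕ → ℝ} (hβ : 0 < β) (hAX : A ≤ X)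
    (hF : ∀ m, Continuous (F m)) (hFb : ∀ m, ∀ s ∈ Icc A X, ‖F m s‖ ≤ b m) (hb : Summable b)
    (hφ : ∀ s ∈ Icc A X, HasSum (fun m => F m s) (φ s)) :
    HasSum (fun m => rlI A β (F m) X) (rlI A β φ X) := by
  simp only [rlI_eq_integral hβ.ne']
  have hIcc : ∀ {s}, s ∈ uIoc A X → s ∈ Icc A X := fun hs =>
    Ioc_subset_Icc_self (uIoc_of_le hAX ▸ hs)
  have hker := (intervalIntegrable_rpow_sub_mul hβ (continuous_const (y := (1 : ℝ))) A X X).norm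
  simp only [mul_one] at hker
  refine (intervalIntegral.hasSum_integral_of_dominated_convergence
    (fun m s => ‖(X - s) ^ (β - 1)‖ * b m)
    (fun m => (intervalIntegrable_iff.1
      (intervalIntegrable_rpow_sub_mul hβ (hF m) A X X)).aestronglyMeasurable)
    (fun m => Eventually.of_forall fun s hs => ?_)
    (Eventually.of_forall fun s _ => hb.mul_left _) ?_
    (Eventually.of_forall fun s hs => (hφ s (hIcc hs)).mul_left _)).mul_left _
  · rw [norm_mul]
    gcongr
    exact hFb m s (hIcc hs)
  · simpa only [tsum_mul_left] using hker.mul_const _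

lemma hasSum_rlI_mul_of_hasSum_pow {c : ℕ → ℝ} {q : ℝ → ℝ} (hβ : 0 < β) (hAX : A ≤ X)
    (hq : ∀ s ∈ Icc A X, HasSum (fun m => c m * (s - X) ^ m) (q s)) (hu : Continuous u) :
    HasSum (fun m : ℕ => c m * ((-1) ^ m * (Gamma (β + m) / Gamma β) * rlI A (β + m) u X))
      (rlI A β (fun s => q s * u s) X) := by
  obtain ⟨M, hM⟩ := (isCompact_Icc (a := A) (b := X)).exists_bound_of_continuousOn hu.continuousOn
  have hsummable : Summable fun m => ‖c m * (A - X) ^ m‖ * M :=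
    (hq A (left_mem_Icc.2 hAX)).summable.norm.mul_right M
  have hbound : ∀ m, ∀ s ∈ Icc A X, ‖c m * ((s - X) ^ m * u s)‖ ≤ ‖c m * (A - X) ^ m‖ * M := by
    intro m s hs
    have hdist : ‖s - X‖ ≤ ‖A - X‖ := by
      rw [norm_of_nonpos (by linarith [hs.2]), norm_of_nonpos (by linarith)]
      linarith [hs.1]
    rw [← mul_assoc, norm_mul, norm_mul, norm_mul, norm_pow, norm_pow]
    gcongr
    exact hM s hs
  have hsum := hasSum_rlI hβ hAX (fun m => by fun_prop) hbound hsummable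
    (φ := fun s => q s * u s) fun s hs => by simpa only [mul_assoc] using (hq s hs).mul_right (u s)
  simpa only [rlI_const_mul, rlI_sub_pow_mul hβ hAX] using hsum

lemma EntireReal.contDiff {h : ℝ → ℝ} (hh : EntireReal h) : ContDiff ℝ ⊤ h := by
  obtain ⟨p, hp⟩ := hh
  exact contDiff_iff_contDiffAt.2 fun x => (hp.analyticAt_of_mem (by simp)).contDiffAt

lemma EntireReal.hasSum_taylor {h : ℝ → ℝ} (hh : EntireReal h) (X s : ℝ) :
    HasSum (fun m : ℕ => iteratedDeriv m h X / m.factorial * (s - X) ^ m) (h s) := by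
  obtain ⟨p, hp⟩ := hh
  have hsum := (hp.changeOrigin (y := X) (by simp)).hasSum_iteratedFDeriv (y := s - X) (by simp)
  rw [zero_add, add_sub_cancel] at hsum
  convert! hsum using 2 with m
  simp only [iteratedFDeriv_apply_eq_iteratedDeriv_mul_prod, Finset.prod_const, Finset.card_univ,
    Fintype.card_fin, smul_eq_mul]
  ring

lemma EntireReal.hasSum_dslope {h : ℝ → ℝ} (hh : EntireReal h) (X s : ℝ) :
    HasSum (fun m : ℕ => iteratedDeriv (m + 1) h X / (m + 1).factorial * (s - X) ^ m)
      (dslope h X s) := by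
  rcases eq_or_ne s X with rfl | hs
  · convert! hasSum_single (f := fun m : ℕ =>
      iteratedDeriv (m + 1) h s / (m + 1).factorial * (s - s) ^ m) 0 ?_ using 1
    · simp
    · intro m hm
      simp [hm]
  · have htail := (hasSum_nat_add_iff' 1).2 (hh.hasSum_taylor X s)
    have hne := sub_ne_zero.2 hs
    rw [dslope_of_ne _ hs, slope_def_field]
    convert! htail.div_const (s - X) using 2 with m
    · field_simp
      ring
    · simp

lemma genBinom_zero (γ : ℝ) : genBinom γ 0 = 1 := by
  simp [genBinom]

lemma genBinom_succ_eq_Gamma {α : ℝ} (hα : α < 1) (m : ℕ) :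
    genBinom α (m + 1) =
      α * ((-1) ^ m * (Gamma (1 - α + m) / Gamma (1 - α))) / (m + 1).factorial := by
  have hΓ : Gamma (1 - α) ≠ 0 := (Gamma_pos_of_pos (sub_pos.2 hα)).ne'
  have hprod : ∏ i ∈ Finset.range (m + 1), (α - i) =
      α * ((-1) ^ m * (Gamma (1 - α + m) / Gamma (1 - α))) := by
    induction m with
    | zero => simp [hΓ]
    | succ m ih =>
      have hne : 1 - α + m ≠ 0 := (add_pos_of_pos_of_nonneg (sub_pos.2 hα) m.cast_nonneg).ne'
      rw [Finset.prod_range_succ, ih, Nat.cast_succ, ← add_assoc, Gamma_add_one hne]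
      ring
  rw [genBinom, hprod]

theorem hasSum_leibniz_rlD {α : ℝ} {h w : ℝ → ℝ} (hα0 : 0 < α) (hα1 : α < 1) (hAX : A < X)
    (hh : EntireReal h) (hw : Continuous w) (hwX : DifferentiableAt ℝ w X) :
    HasSum (fun m : ℕ => genBinom α m * iteratedDeriv m h X * rlD A (α - m) w X)
      (rlD A α (fun s => h s * w s) X) := by
  have hβ : 0 < 1 - α := sub_pos.2 hα1
  have hhc := hh.contDiff
  have htail := (hasSum_rlI_mul_of_hasSum_pow hβ hAX.le
    (fun s _ => hh.hasSum_dslope X s) hw).mul_left α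
  rw [← hasSum_nat_add_iff' 1, rlD_mul hα0 hα1 hAX hhc.continuous
    (hhc.differentiable (by simp) X) hw hwX]
  convert! htail using 1
  · funext m
    have horder : -(α - (m + 1 : ℕ)) = 1 - α + m := by push_cast; ring
    have hneg : α - (m + 1 : ℕ) ≤ 0 := by push_cast; linarith [m.cast_nonneg (α := ℝ)]
    rw [rlD_eq_rlI hneg, horder, genBinom_succ_eq_Gamma hα1]
    ring
  · simp [genBinom_zero]

end RiemannLiouville

section ChangeOfVariable

open Set Filter Topology

variable {a b x : ℝ} {Ψ φ : ℝ → ℝ}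

lemma psiI_comp (hΨ : ContinuousOn Ψ (Icc a b)) (hΨ' : ∀ t ∈ Ioo a b, 0 < deriv Ψ t)
    (hx : x ∈ Icc a b) (φ : ℝ → ℝ) (β : ℝ) :
    psiI a Ψ (fun t => φ (Ψ t)) β x = rlI (Ψ a) β φ (Ψ x) := by
  have hsub : Ioo (min a x) (max a x) ⊆ Ioo a b := by
    rw [min_eq_left hx.1, max_eq_right hx.1]
    exact Ioo_subset_Ioo_right hx.2
  have hsubst := intervalIntegral.integral_deriv_smul_comp_of_deriv_nonneg
    (hΨ.mono (uIcc_of_le hx.1 ▸ Icc_subset_Icc_right hx.2))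
    (fun t ht => (differentiableAt_of_deriv_ne_zero (hΨ' t (hsub ht)).ne').hasDerivAt)
    (fun t ht => (hΨ' t (hsub ht)).le) (g := fun s => (Ψ x - s) ^ (β - 1) * φ s)
  simp only [psiI, rlI, ← hsubst, smul_eq_mul, Function.comp_apply, mul_assoc]

lemma psiRLD_comp_of_nonpos (hΨ : ContinuousOn Ψ (Icc a b)) (hΨ' : ∀ t ∈ Ioo a b, 0 < deriv Ψ t)
    (hx : x ∈ Icc a b) {γ : ℝ} (hγ : γ ≤ 0) (φ : ℝ → ℝ) :
    psiRLD a Ψ (fun t => φ (Ψ t)) γ x = rlD (Ψ a) γ φ (Ψ x) := by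
  rw [psiRLD, if_pos hγ, psiI_comp hΨ hΨ' hx, rlD_eq_rlI hγ]

lemma psiRLD_comp_of_pos (hΨ : ContinuousOn Ψ (Icc a b)) (hΨ' : ∀ t ∈ Ioo a b, 0 < deriv Ψ t)
    (hx : x ∈ Ioo a b) {γ : ℝ} (hγ : 0 < γ)
    (hφ : DifferentiableAt ℝ (rlI (Ψ a) (1 - γ) φ) (Ψ x)) :
    psiRLD a Ψ (fun t => φ (Ψ t)) γ x = rlD (Ψ a) γ φ (Ψ x) := by
  have hne : deriv Ψ x ≠ 0 := (hΨ' x hx).ne'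
  have hconj : (fun y => psiI a Ψ (fun t => φ (Ψ t)) (1 - γ) y) =ᶠ[𝓝 x]
      rlI (Ψ a) (1 - γ) φ ∘ Ψ := by
    filter_upwards [Icc_mem_nhds hx.1 hx.2] with y hy using psiI_comp hΨ hΨ' hy φ (1 - γ)
  rw [psiRLD, if_neg hγ.not_ge, hconj.deriv_eq,
    deriv_comp x hφ (differentiableAt_of_deriv_ne_zero hne), rlD_eq_deriv hγ, mul_comm,
    mul_inv_cancel_right₀ hne]

lemma deriv_rpow_const_pos {ρ t : ℝ} (hρ : 0 < ρ) (ht : 0 < t) :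
    0 < deriv (fun t : ℝ => t ^ ρ) t := by
  rw [Real.deriv_rpow_const]
  positivity

theorem leibniz_Katugampola_general (hΨ : ContinuousOn Ψ (Icc a b))
    (hΨ' : ∀ t ∈ Ioo a b, 0 < deriv Ψ t) {α : ℝ} (hα0 : 0 < α) (hα1 : α < 1) {h w : ℝ → ℝ}
    (hh : EntireReal h) (hw : Continuous w) (hx : x ∈ Ioo a b)
    (hwx : DifferentiableAt ℝ w (Ψ x)) :
    HasSum
      (fun m : ℕ => genBinom α m * iteratedDeriv m h (Ψ x) *
        psiRLD a Ψ (fun t => w (Ψ t)) (α - m) x)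
      (psiRLD a Ψ (fun t => h (Ψ t) * w (Ψ t)) α x) := by
  have hβ : 0 < 1 - α := sub_pos.2 hα1
  have hΨx : Ψ a < Ψ x :=
    strictMonoOn_of_deriv_pos (convex_Icc a b) hΨ (by simpa only [interior_Icc] using hΨ')
      (left_mem_Icc.2 (hx.1.trans hx.2).le) (Ioo_subset_Icc_self hx) hx.1
  have hhc := hh.contDiff
  have hhwx : DifferentiableAt ℝ (fun s => h s * w s) (Ψ x) :=
    (hhc.differentiable (by simp) _).mul hwx
  have hterm : ∀ m : ℕ,
      psiRLD a Ψ (fun t => w (Ψ t)) (α - m) x = rlD (Ψ a) (α - m) w (Ψ x) := by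
    rintro (_ | m)
    · simpa only [Nat.cast_zero, sub_zero] using
        psiRLD_comp_of_pos hΨ hΨ' hx hα0 (differentiableAt_rlI hβ hw hwx hΨx)
    · refine psiRLD_comp_of_nonpos hΨ hΨ' (Ioo_subset_Icc_self hx) ?_ w
      push_cast
      linarith [m.cast_nonneg (α := ℝ)]
  rw [psiRLD_comp_of_pos (φ := fun s => h s * w s) hΨ hΨ' hx hα0
    (differentiableAt_rlI hβ (hhc.continuous.mul hw) hhwx hΨx)]
  simpa only [hterm] using hasSum_leibniz_rlD hα0 hα1 hΨx hh hw hwx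

end ChangeOfVariable

/-- Leibniz type rule for the Katugampola fractional derivative,
i.e. the Ψ-Riemann–Liouville derivative with `Ψ(x) = x^ρ`. -/
theorem leibniz_Katugampola
    (a b ρ : ℝ) (ha : 0 < a) (hab : a < b) (hρ : 0 < ρ)
    (α : ℝ) (hα0 : 0 < α) (hα1 : α < 1)
    (f g h w : ℝ → ℝ)
    (hf : f = fun t => h (t ^ ρ)) (hg : g = fun t => w (t ^ ρ))
    (hh : EntireReal h) (hw : EntireReal w)
    (x : ℝ) (hx : x ∈ Set.Ioo a b) :
    HasSum
      (fun m : ℕ => genBinom α m * iteratedDeriv m h (x ^ ρ) *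
        psiRLD a (fun t => t ^ ρ) g (α - m) x)
      (psiRLD a (fun t => t ^ ρ) (fun t => f t * g t) α x) := by
  subst hf hg
  exact leibniz_Katugampola_general (continuous_rpow_const hρ.le).continuousOn
    (fun t ht => deriv_rpow_const_pos hρ (ha.trans ht.1)) hα0 hα1 hh hw.contDiff.continuous hx
    (hw.contDiff.differentiable (by simp) _)
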